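/- Consider Signal Temporal Logic (STL) formulas over signals w : ℝ → (Fin d → ℝ), generated by the grammar φ ::= α | ⊥ | ¬φ | φ₁ ∧ φ₂ | □_{[a,b]} φ, where each atomic proposition α is given by a function f : (ℝ → (Fin d → ℝ)) → ℝ and means f(w) > 0, and each temporal interval [a, b] is a nonempty compact interval (a ≤ b). Define the Boolean semantics by: w ⊨ α iff f(w) > 0; w ⊨ ⊥ never; w ⊨ ¬φ iff not w ⊨ φ; w ⊨ φ₁ ∧ φ₂ iff w ⊨ φ₁ and w ⊨ φ₂; w ⊨ □_{[a,b]} φ iff for all t ∈ [a, b], w^t ⊨ φ, where w^t(s) = w(t + s). Define the quantitative robustness ρ(w, φ) by: ρ(w, α) = f(w); ρ(w, ⊥) = −∞ (working in extended reals, or assuming all infima below are attained: for each □_{[a,b]} φ subformula, assume there exists t* ∈ [a, b] with ρ(w^{t*}, φ) = inf_{t ∈ [a,b]} ρ(w^t, φ)); ρ(w, ¬φ) = −ρ(w, φ); ρ(w, φ₁ ∧ φ₂) = min(ρ(w, φ₁), ρ(w, φ₂)); ρ(w, □_{[a,b]} φ) = inf_{t ∈ [a,b]} ρ(w^t, φ).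 Then robustness is sound with respect to the Boolean semantics: for every formula φ and every signal w, if ρ(w, φ) > 0 then w ⊨ φ, and if ρ(w, φ) < 0 then w does not satisfy φ. -/

import Mathlib

/-- STL formulas over signals `ℝ → (Fin d → ℝ)`: atomic propositions given by a
map `f` (meaning `f w > 0`), falsum, negation, conjunction, and the always
operator over a nonempty compact interval `[a, b]` (with `a ≤ b`). -/
inductive STL (d : ℕ) : Type where
  | atom (f : (ℝ → Fin d → ℝ) → ℝ)
  | falsum
  | not (φ : STL d)
  | and (φ₁ φ₂ : STL d)
  | always (a b : ℝ) (hab : a ≤ b) (φ : STL d)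

/-- The shifted signal `w^t`, defined by `w^t(s) = w (t + s)`. -/
def shift {d : ℕ} (w : ℝ → Fin d → ℝ) (t : ℝ) : ℝ → Fin d → ℝ :=
  fun s => w (t + s)

/-- Boolean satisfaction semantics of STL. -/
def Sat {d : ℕ} : (ℝ → Fin d → ℝ) → STL d → Prop
  | w, .atom f => 0 < f w
  | _, .falsum => False
  | w, .not φ => ¬ Sat w φ
  | w, .and φ₁ φ₂ => Sat w φ₁ ∧ Sat w φ₂
  | w, .always a b _ φ => ∀ t ∈ Set.Icc a b, Sat (shift w t) φ

/-- Quantitative robustness semantics of STL, valued in the extended reals. -/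
noncomputable def rho {d : ℕ} : (ℝ → Fin d → ℝ) → STL d → EReal
  | w, .atom f => (f w : EReal)
  | _, .falsum => ⊥
  | w, .not φ => -rho w φ
  | w, .and φ₁ φ₂ => min (rho w φ₁) (rho w φ₂)
  | w, .always a b _ φ => ⨅ t : Set.Icc a b, rho (shift w t) φ

/-- The truth value `p` agrees with the strict sign of the quantity `r`; nothing is required of
`p` when `r = 0`. This is the relation that robustness should bear to satisfaction. -/
def SignSound {α : Type*} [Zero α] [LT α] (r : α) (p : Prop) : Prop :=
  (0 < r → p) ∧ (r < 0 → ¬ p)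

namespace SignSound

variable {α : Type*} [Zero α]

protected theorem pos [Preorder α] (r : α) : SignSound r (0 < r) :=
  ⟨id, lt_asymm⟩

theorem bot_false [Preorder α] [OrderBot α] : SignSound (⊥ : α) False :=
  ⟨not_lt_bot, fun _ => id⟩

protected theorem neg {r : EReal} {p : Prop} (h : SignSound r p) : SignSound (-r) (¬ p) :=
  ⟨fun hr => h.2 (EReal.neg_pos.mp hr), fun hr => not_not_intro (h.1 (EReal.neg_lt_zero.mp hr))⟩

protected theorem min [LinearOrder α] {r s : α} {p q : Prop}
    (hp : SignSound r p) (hq : SignSound s q) : SignSound (min r s) (p ∧ q) := by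
  refine ⟨fun hpos => ?_, fun hneg hpq => ?_⟩
  · obtain ⟨hr, hs⟩ := lt_min_iff.mp hpos
    exact ⟨hp.1 hr, hq.1 hs⟩
  · rcases min_lt_iff.mp hneg with hr | hs
    · exact hp.2 hr hpq.1
    · exact hq.2 hs hpq.2

protected theorem iInf [CompleteLinearOrder α] {ι : Sort*} {r : ι → α} {p : ι → Prop}
    (h : ∀ i, SignSound (r i) (p i)) : SignSound (⨅ i, r i) (∀ i, p i) := by
  refine ⟨fun hpos i => (h i).1 (hpos.trans_le (iInf_le r i)), fun hneg hall => ?_⟩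
  obtain ⟨i, hi⟩ := iInf_lt_iff.mp hneg
  exact (h i).2 hi (hall i)

end SignSound

/-- Soundness of STL robustness with respect to Boolean satisfaction:
positive robustness implies satisfaction, negative robustness implies
non-satisfaction. -/
theorem stl_robustness_sound {d : ℕ} (φ : STL d) (w : ℝ → Fin d → ℝ) :
    (0 < rho w φ → Sat w φ) ∧ (rho w φ < 0 → ¬ Sat w φ) := by
  change SignSound (rho w φ) (Sat w φ)
  induction φ generalizing w with
  | atom f => simpa only [rho, Sat, EReal.coe_pos] using SignSound.pos (f w : EReal)
  | falsum => exact SignSound.bot_false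
  | not φ ih => exact (ih w).neg
  | and φ₁ φ₂ ih₁ ih₂ => exact (ih₁ w).min (ih₂ w)
  | always a b _ φ ih =>
    simpa only [rho, Sat, Subtype.forall] using
      SignSound.iInf fun t : Set.Icc a b => ih (shift w t)
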